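/- arXiv:1502.04328 — 2 statements merged into one kernel-verified Lean document; each statement's English description precedes it below -/
import Mathlib

section
/- Let X and Y be finite nonempty sets of points in the plane whose convex hulls are disjoint. Then there exist x ∈ X and y ∈ Y that see each other: the segment [x, y] intersects the convex hull of X only at x and intersects the convex hull of Y only at y. -/
open scoped Classical

noncomputable section

abbrev Pt : Type := ℝ × ℝ

/-- Signed value of `z` with respect to the line `a x + b y + c = 0`. -/
def sideVal (a b c : ℝ) (z : Pt) : ℝ := a * z.1 + b * z.2 + c

/-- The segment `[u,v]` crosses the line: endpoints strictly on opposite sides. -/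
def crossesLine (a b c : ℝ) (u v : Pt) : Prop := sideVal a b c u * sideVal a b c v < 0

/-- Planar determinant of two vectors. -/
def det2 (u v : Pt) : ℝ := u.1 * v.2 - u.2 * v.1

/-- `w` lies in the closed convex cone spanned by `u` and `v`. -/
def memCone (u v w : Pt) : Prop := ∃ s t : ℝ, 0 ≤ s ∧ 0 ≤ t ∧ w = s • u + t • v

/-- No three points of `X` are collinear. -/
def GenPos (X : Finset Pt) : Prop :=
  ∀ x ∈ X, ∀ y ∈ X, ∀ z ∈ X, x ≠ y → x ≠ z → y ≠ z → ¬ Collinear ℝ ({x, y, z} : Set Pt)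

/-- Edges of a straight-line path visiting the points of `l` in order. -/
def pathEdges (l : List Pt) : List (Pt × Pt) := l.zip l.tail

def segOf (e : Pt × Pt) : Set Pt := segment ℝ e.1 e.2

/-- Non-adjacent edges are disjoint; adjacent edges meet only at the shared vertex. -/
def NonSelfIntersecting (l : List Pt) : Prop :=
  (∀ i j, ∀ hi : i < (pathEdges l).length, ∀ hj : j < (pathEdges l).length, i + 1 < j →
    segOf ((pathEdges l).get ⟨i, hi⟩) ∩ segOf ((pathEdges l).get ⟨j, hj⟩) = ∅) ∧
  (∀ i, ∀ hi : i < (pathEdges l).length, ∀ hj : i + 1 < (pathEdges l).length,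
    segOf ((pathEdges l).get ⟨i, hi⟩) ∩ segOf ((pathEdges l).get ⟨i + 1, hj⟩)
      = {((pathEdges l).get ⟨i + 1, hj⟩).1})

/-- Number of edges of the path crossing the line `a x + b y + c = 0`. -/
def crossCount (a b c : ℝ) (l : List Pt) : ℕ :=
  ((pathEdges l).filter (fun e => decide (crossesLine a b c e.1 e.2))).length

/-- The `i`-th edge of the cycle on the points of `l` (indices mod `l.length`). -/
def cEdge (l : List Pt) (i : ℕ) (hi : i < l.length) : Set Pt :=
  segment ℝ (l.get ⟨i, hi⟩)
    (l.get ⟨(i + 1) % l.length, Nat.mod_lt _ (Nat.lt_of_le_of_lt (Nat.zero_le i) hi)⟩)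

/-- Simple polygon condition for the cycle through `l`. -/
def CycleNSI (l : List Pt) : Prop :=
  ∀ i j, ∀ hi : i < l.length, ∀ hj : j < l.length, i ≠ j →
    ((i + 1) % l.length = j → cEdge l i hi ∩ cEdge l j hj = {l.get ⟨j, hj⟩}) ∧
    ((j + 1) % l.length = i → cEdge l i hi ∩ cEdge l j hj = {l.get ⟨i, hi⟩}) ∧
    ((i + 1) % l.length ≠ j → (j + 1) % l.length ≠ i → cEdge l i hi ∩ cEdge l j hj = ∅)

/-- Number of edges of the cycle on `l` crossing the line. -/
def cycleCrossCount (a b c : ℝ) (l : List Pt) : ℕ :=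
  (Finset.univ.filter (fun i : Fin l.length =>
    crossesLine a b c (l.get i)
      (l.get ⟨(i.1 + 1) % l.length,
        Nat.mod_lt _ (Nat.lt_of_le_of_lt (Nat.zero_le i.1) i.2)⟩))).card

/-!
A continuous linear functional separating the two hulls attains its maximum over `convexHull X` at
a point `x` of `X` and its minimum over `convexHull Y` at a point `y` of `Y`. It strictly increases
along the segment from `x` to `y`, so the segment leaves the first hull at once and enters the
second only at its end.
-/

section SegmentIntersection

variable {𝕜 E β : Type*} [Semiring 𝕜] [PartialOrder 𝕜] [ZeroLEOneClass 𝕜]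
  [AddCommMonoid E] [Module 𝕜 E]
  [AddCommMonoid β] [LinearOrder β] [IsOrderedCancelAddMonoid β]
  [Module 𝕜 β] [PosSMulStrictMono 𝕜 β]
  {s : Set E} {f : E → β} {x y : E}

theorem segment_inter_eq_singleton_left_of_isMaxOn (hf : ConcaveOn 𝕜 (segment 𝕜 x y) f)
    (hx : x ∈ s) (hmax : IsMaxOn f s x) (hxy : f x < f y) :
    segment 𝕜 x y ∩ s = {x} := by
  refine Set.Subset.antisymm ?_ (Set.singleton_subset_iff.2 ⟨left_mem_segment 𝕜 x y, hx⟩)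
  rintro z ⟨hz, hzs⟩
  have hzx : f z ≤ f x := hmax hzs
  have hzy : f z < f y := hzx.trans_lt hxy
  by_contra hne
  have hz_open : z ∈ openSegment 𝕜 x y :=
    mem_openSegment_of_ne_left_right (Ne.symm hne) (fun h => hzy.ne (h ▸ rfl)) hz
  have hxz : f x < f z :=
    hf.left_lt_of_lt_right (left_mem_segment 𝕜 x y) (right_mem_segment 𝕜 x y) hz_open hzy
  exact hxz.not_ge hzx

theorem segment_inter_eq_singleton_right_of_isMinOn (hf : ConvexOn 𝕜 (segment 𝕜 x y) f)
    (hy : y ∈ s) (hmin : IsMinOn f s y) (hxy : f x < f y) :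
    segment 𝕜 x y ∩ s = {y} := by
  rw [segment_symm] at hf ⊢
  exact segment_inter_eq_singleton_left_of_isMaxOn hf.dual hy hmin.dual hxy

end SegmentIntersection

section ExtremumOverConvexHull

variable {𝕜 E β : Type*} [Field 𝕜] [LinearOrder 𝕜] [IsStrictOrderedRing 𝕜]
  [AddCommGroup E] [Module 𝕜 E] [TopologicalSpace E]
  [AddCommGroup β] [LinearOrder β] [IsOrderedAddMonoid β] [Module 𝕜 β]
  [IsStrictOrderedModule 𝕜 β] [TopologicalSpace β]
  {s : Set E} {f : E → β}

theorem exists_mem_isMaxOn_convexHull [ClosedIciTopology β] (hs : s.Nonempty)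
    (hcompact : IsCompact (convexHull 𝕜 s)) (hf : ConvexOn 𝕜 (convexHull 𝕜 s) f)
    (hcont : ContinuousOn f (convexHull 𝕜 s)) :
    ∃ x ∈ s, IsMaxOn f (convexHull 𝕜 s) x := by
  obtain ⟨z, hz, hmax⟩ := hcompact.exists_isMaxOn hs.convexHull hcont
  obtain ⟨x, hx, hzx⟩ := hf.exists_ge_of_mem_convexHull (subset_convexHull 𝕜 s) hz
  exact ⟨x, hx, fun w hw => (hmax hw).trans hzx⟩

theorem exists_mem_isMinOn_convexHull [ClosedIicTopology β] (hs : s.Nonempty)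
    (hcompact : IsCompact (convexHull 𝕜 s)) (hf : ConcaveOn 𝕜 (convexHull 𝕜 s) f)
    (hcont : ContinuousOn f (convexHull 𝕜 s)) :
    ∃ x ∈ s, IsMinOn f (convexHull 𝕜 s) x :=
  exists_mem_isMaxOn_convexHull (β := βᵒᵈ) hs hcompact hf.dual hcont

end ExtremumOverConvexHull

theorem stmt6_general {E : Type*} [AddCommGroup E] [Module ℝ E] [TopologicalSpace E]
    [IsTopologicalAddGroup E] [ContinuousSMul ℝ E] [LocallyConvexSpace ℝ E] [T2Space E]
    {X Y : Set E} (hX : X.Nonempty) (hY : Y.Nonempty)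
    (hXc : IsCompact (convexHull ℝ X)) (hYc : IsCompact (convexHull ℝ Y))
    (hdisj : Disjoint (convexHull ℝ X) (convexHull ℝ Y)) :
    ∃ x ∈ X, ∃ y ∈ Y,
      segment ℝ x y ∩ convexHull ℝ X = {x} ∧ segment ℝ x y ∩ convexHull ℝ Y = {y} := by
  obtain ⟨f, u, v, hfX, huv, hfY⟩ := geometric_hahn_banach_compact_closed
    (convex_convexHull ℝ X) hXc (convex_convexHull ℝ Y) hYc.isClosed hdisj
  have hconvex {s : Set E} (hs : Convex ℝ s) : ConvexOn ℝ s f := f.toLinearMap.convexOn hs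
  have hconcave {s : Set E} (hs : Convex ℝ s) : ConcaveOn ℝ s f := f.toLinearMap.concaveOn hs
  obtain ⟨x, hx, hmax⟩ := exists_mem_isMaxOn_convexHull hX hXc
    (hconvex (convex_convexHull ℝ X)) f.continuous.continuousOn
  obtain ⟨y, hy, hmin⟩ := exists_mem_isMinOn_convexHull hY hYc
    (hconcave (convex_convexHull ℝ Y)) f.continuous.continuousOn
  have hx' : x ∈ convexHull ℝ X := subset_convexHull ℝ X hx
  have hy' : y ∈ convexHull ℝ Y := subset_convexHull ℝ Y hy
  have hxy : f x < f y := (hfX x hx').trans (huv.trans (hfY y hy'))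
  exact ⟨x, hx, y, hy,
    segment_inter_eq_singleton_left_of_isMaxOn (hconcave (convex_segment x y)) hx' hmax hxy,
    segment_inter_eq_singleton_right_of_isMinOn (hconvex (convex_segment x y)) hy' hmin hxy⟩

/-- Two finite sets with disjoint convex hulls contain points seeing each other. -/
theorem stmt6 (X Y : Finset Pt) (hX : X.Nonempty) (hY : Y.Nonempty)
    (hdisj : convexHull ℝ ((X : Finset Pt) : Set Pt) ∩ convexHull ℝ ((Y : Finset Pt) : Set Pt) = ∅) :
    ∃ x ∈ X, ∃ y ∈ Y,
      segment ℝ x y ∩ convexHull ℝ ((X : Finset Pt) : Set Pt) = {x} ∧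
      segment ℝ x y ∩ convexHull ℝ ((Y : Finset Pt) : Set Pt) = {y} := by
  exact stmt6_general hX hY (X.finite_toSet.isCompact_convexHull ℝ)
    (Y.finite_toSet.isCompact_convexHull ℝ) (Set.disjoint_iff_inter_eq_empty.2 hdisj)
end
end

section
/- Let X be a finite set of points in general position, x ∈ X a vertex of the convex hull of X, and ℓ a line with points of X strictly on both sides. Suppose x' ∈ X \ {x} is a point seen by x with respect to X \ {x}, chosen on the same side of ℓ as x whenever such a visible point on that side exists. If x' lies strictly on the opposite side of ℓ from x, then every point of X \ {x} lies on the opposite side of ℓ from x or on ℓ — in fact, since general position forbids points on ℓ through two points of X in degenerate ways, assume no point of X lies on ℓ; then all of X \ {x} lies strictly on the opposite side of ℓ from x. -/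
open scoped Classical

noncomputable section

/-!
Suppose some point `z` of `Y = X \ {x}` lies on the same side `H` of `ℓ` as `x`. The first point `w`
of `convexHull Y` met on the way from `x` to `z` is seen by `x`, and lies in `H` because `H` is
convex. A visible point of `convexHull Y` is a convex combination of visible points of `Y`
(`IsVisible.mem_convexHull_isVisible`). These cannot all lie in the complement of `H`, which is
convex too, so `x` sees a point of `Y` in `H`, and `x'` would have been chosen in `H`.
-/

section Visibility

variable {𝕜 E : Type*} [Field 𝕜] [LinearOrder 𝕜] [IsStrictOrderedRing 𝕜] [AddCommGroup E]
  [Module 𝕜 E]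

theorem segment_inter_eq_singleton_iff_isVisible {C : Set E} {x y : E} (hx : x ∉ C) (hy : y ∈ C) :
    segment 𝕜 x y ∩ C = {y} ↔ IsVisible 𝕜 C x y := by
  constructor
  · intro h z hz hxzy
    exact hxzy.ne_right (h.subset ⟨hxzy.wbtw.mem_segment, hz⟩)
  · intro h
    refine Set.eq_singleton_iff_unique_mem.2 ⟨⟨right_mem_segment 𝕜 x y, hy⟩, ?_⟩
    rintro z ⟨hxzy, hz⟩
    by_contra hzy
    exact h hz ⟨mem_segment_iff_wbtw.1 hxzy, ne_of_mem_of_not_mem hz hx, hzy⟩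

end Visibility

section Separation

variable {E : Type*} [AddCommGroup E] [Module ℝ E] [TopologicalSpace E] [IsTopologicalAddGroup E]
  [ContinuousSMul ℝ E] {s : Set E} {x z : E}

theorem exists_mem_inter_isVisible_of_convex_compl {H : Set E} (hH : Convex ℝ H)
    (hHc : Convex ℝ Hᶜ) (hs : IsClosed (convexHull ℝ s)) (hx : x ∉ convexHull ℝ s) (hxH : x ∈ H)
    (hz : z ∈ convexHull ℝ s) (hzH : z ∈ H) :
    ∃ y ∈ s ∩ H, IsVisible ℝ (convexHull ℝ s) x y := by
  obtain ⟨w, hw, hxwz, hxw⟩ := hs.exists_wbtw_isVisible hz x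
  have hwH : w ∈ H := hH.mem_of_wbtw hxwz hxH hzH
  by_contra! hinvisible
  have hsub : {y ∈ s | IsVisible ℝ (convexHull ℝ s) x y} ⊆ Hᶜ :=
    fun y hy hyH => hinvisible y ⟨hy.1, hyH⟩ hy.2
  exact convexHull_min hsub hHc (hxw.mem_convexHull_isVisible hx hw) hwH

theorem exists_isVisible_of_affineMap_pos (g : E →ᵃ[ℝ] ℝ) (hs : IsClosed (convexHull ℝ s))
    (hx : x ∉ convexHull ℝ s) (hgx : 0 < g x) (hz : z ∈ convexHull ℝ s) (hgz : 0 < g z) :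
    ∃ y ∈ s, 0 < g y ∧ IsVisible ℝ (convexHull ℝ s) x y := by
  have hcompl : Convex ℝ (g ⁻¹' Set.Ioi 0)ᶜ := by
    rw [← Set.preimage_compl, Set.compl_Ioi]
    exact (convex_Iic 0).affine_preimage g
  obtain ⟨y, ⟨hy, hgy⟩, hxy⟩ := exists_mem_inter_isVisible_of_convex_compl
    ((convex_Ioi 0).affine_preimage g) hcompl hs hx hgx hz hgz
  exact ⟨y, hy, hgy, hxy⟩

theorem stmt7_general (f : E →ᵃ[ℝ] ℝ) (hs : IsClosed (convexHull ℝ s)) (hx : x ∉ convexHull ℝ s)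
    (hf : ∀ y ∈ s, f y ≠ 0) (x' : E)
    (hchoice : (∃ y ∈ s, 0 < f y * f x ∧ segment ℝ x y ∩ convexHull ℝ s = {y}) → 0 < f x' * f x)
    (hopp : f x' * f x < 0) :
    ∀ y ∈ s, f y * f x < 0 := by
  intro z hz
  have hfx : f x ≠ 0 := right_ne_zero_of_mul hopp.ne
  refine (mul_ne_zero (hf z hz) hfx).lt_of_le (not_lt.1 fun hside => hopp.not_gt (hchoice ?_))
  have hmul (p : E) : (f x • f) p = f p * f x := mul_comm (f x) (f p)
  obtain ⟨y, hy, hgy, hxy⟩ := exists_isVisible_of_affineMap_pos (f x • f) hs hx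
    (by rw [hmul]; exact mul_self_pos.2 hfx) (subset_convexHull ℝ s hz) (by rwa [hmul])
  rw [hmul] at hgy
  exact ⟨y, hy, hgy,
    (segment_inter_eq_singleton_iff_isVisible hx (subset_convexHull ℝ s hy)).2 hxy⟩

end Separation

/-- The function `sideVal a b c` as an affine map, so that the two sides of the line
`a x + b y + c = 0` are the sets where an affine map is positive or negative. -/
def sideAffineMap (a b c : ℝ) : Pt →ᵃ[ℝ] ℝ where
  toFun := sideVal a b c
  linear := a • LinearMap.fst ℝ ℝ ℝ + b • LinearMap.snd ℝ ℝ ℝ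
  map_vadd' p v := by
    simp only [sideVal, vadd_eq_add, Prod.fst_add, Prod.snd_add, LinearMap.add_apply,
      LinearMap.smul_apply, LinearMap.fst_apply, LinearMap.snd_apply, smul_eq_mul]
    ring

/-- If the visible point `x'` chosen preferentially on `x`'s side of `ℓ` is on the
opposite side, then all of `X \ {x}` is strictly on the opposite side. -/
theorem stmt7 (X : Finset Pt) (hgp : GenPos X) (a b c : ℝ) (hab : (a, b) ≠ ((0:ℝ), (0:ℝ)))
    (hnone : ∀ z ∈ X, sideVal a b c z ≠ 0)
    (x : Pt) (hx : x ∈ X) (hvert : x ∉ convexHull ℝ ((X.erase x : Finset Pt) : Set Pt))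
    (hboth : (∃ z ∈ X, 0 < sideVal a b c z) ∧ (∃ z ∈ X, sideVal a b c z < 0))
    (x' : Pt) (hx' : x' ∈ X.erase x)
    (hsees : segment ℝ x x' ∩ convexHull ℝ ((X.erase x : Finset Pt) : Set Pt) = {x'})
    (hchoice : (∃ y ∈ X.erase x, 0 < sideVal a b c y * sideVal a b c x ∧
        segment ℝ x y ∩ convexHull ℝ ((X.erase x : Finset Pt) : Set Pt) = {y}) →
      0 < sideVal a b c x' * sideVal a b c x)
    (hopp : sideVal a b c x' * sideVal a b c x < 0) :
    ∀ y ∈ X.erase x, sideVal a b c y * sideVal a b c x < 0 :=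
  stmt7_general (sideAffineMap a b c) ((X.erase x).finite_toSet.isClosed_convexHull ℝ) hvert
    (fun y hy => hnone y (Finset.mem_of_mem_erase hy)) x' hchoice hopp
end
end
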